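/- Let α ≥ 0 and let A = [a_{j,p}] and B = [b_{r,k}] be doubly infinite complex matrices (indexed by ℤ×ℤ) with finite Sobolev norms ‖A‖_α² = Σ_{j,p} (1+j²+p²)^α |a_{j,p}|² and similarly for B. Then the matrix product AB = [Σ_p a_{j,p} b_{p,k}] is well-defined, has finite α-norm, and ‖AB‖_α ≤ ‖A‖_α · ‖B‖_α. -/

import Mathlib

open scoped ComplexConjugate

/-- The Sobolev α-weight on ℤ². -/
noncomputable def sobolevWeight (α : ℝ) (k l : ℤ) : ℝ := (1 + (k:ℝ)^2 + (l:ℝ)^2) ^ α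

lemma sw_nonneg (α : ℝ) (k l : ℤ) : 0 ≤ sobolevWeight α k l := by
  unfold sobolevWeight; positivity

lemma sw_one_le {α : ℝ} (hα : 0 ≤ α) (k l : ℤ) : 1 ≤ sobolevWeight α k l := by
  unfold sobolevWeight
  apply Real.one_le_rpow _ hα
  nlinarith [sq_nonneg (k:ℝ), sq_nonneg (l:ℝ)]

lemma sw_le {α : ℝ} (hα : 0 ≤ α) (j p k : ℤ) :
    sobolevWeight α j k ≤ sobolevWeight α j p * sobolevWeight α p k := by
  unfold sobolevWeight
  rw [← Real.mul_rpow (by positivity) (by positivity)]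
  apply Real.rpow_le_rpow (by positivity) _ hα
  have h1 := sq_nonneg (j:ℝ)
  have h2 := sq_nonneg (p:ℝ)
  have h3 := sq_nonneg (k:ℝ)
  nlinarith [mul_nonneg h1 h2, mul_nonneg h1 h3, mul_nonneg h2 h3, mul_nonneg h2 h2]

lemma cs_tsum {f g : ℤ → ℝ} (hf : ∀ i, 0 ≤ f i) (hg : ∀ i, 0 ≤ g i)
    (sf : Summable fun i => f i ^ 2) (sg : Summable fun i => g i ^ 2) :
    (Summable fun i => f i * g i) ∧
      (∑' i, f i * g i) ^ 2 ≤ (∑' i, f i ^ 2) * ∑' i, g i ^ 2 := by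
  have h := Real.inner_le_Lp_mul_Lq_tsum_of_nonneg (p := 2) (q := 2)
    Real.HolderConjugate.two_two hf hg
    (by simpa using sf) (by simpa using sg)
  have hs := Real.summable_mul_of_Lp_Lq_of_nonneg (p := 2) (q := 2)
    Real.HolderConjugate.two_two hf hg
    (by simpa using sf) (by simpa using sg)
  refine ⟨hs, ?_⟩
  have h2 := h
  simp only [Real.rpow_two, ← Real.sqrt_eq_rpow] at h2
  have h0 : 0 ≤ ∑' i, f i * g i := tsum_nonneg fun i => mul_nonneg (hf i) (hg i)
  have h3 := pow_le_pow_left₀ h0 h2 2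
  rwa [mul_pow, Real.sq_sqrt (tsum_nonneg fun i => sq_nonneg _),
    Real.sq_sqrt (tsum_nonneg fun i => sq_nonneg _)] at h3

lemma entry_bound {α : ℝ} (hα : 0 ≤ α) (A B : ℤ → ℤ → ℂ) (j k : ℤ)
    (hA : Summable fun p : ℤ => sobolevWeight α j p * ‖A j p‖ ^ 2)
    (hB : Summable fun p : ℤ => sobolevWeight α p k * ‖B p k‖ ^ 2) :
    (Summable fun p : ℤ => A j p * B p k) ∧
    sobolevWeight α j k * ‖∑' p : ℤ, A j p * B p k‖ ^ 2 ≤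
      (∑' p : ℤ, sobolevWeight α j p * ‖A j p‖ ^ 2) *
        ∑' p : ℤ, sobolevWeight α p k * ‖B p k‖ ^ 2 := by
  have ef : ∀ p, (√(sobolevWeight α j p) * ‖A j p‖) ^ 2 = sobolevWeight α j p * ‖A j p‖ ^ 2 := by
    intro p; rw [mul_pow, Real.sq_sqrt (sw_nonneg _ _ _)]
  have eg : ∀ p, (√(sobolevWeight α p k) * ‖B p k‖) ^ 2 = sobolevWeight α p k * ‖B p k‖ ^ 2 := by
    intro p; rw [mul_pow, Real.sq_sqrt (sw_nonneg _ _ _)]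
  obtain ⟨hs, hle⟩ := cs_tsum (f := fun p => √(sobolevWeight α j p) * ‖A j p‖)
    (g := fun p => √(sobolevWeight α p k) * ‖B p k‖)
    (fun p => by positivity) (fun p => by positivity)
    (by simpa only [ef] using hA) (by simpa only [eg] using hB)
  simp only [ef, eg] at hle
  have hpt : ∀ p, √(sobolevWeight α j k) * ‖A j p * B p k‖ ≤
      (√(sobolevWeight α j p) * ‖A j p‖) * (√(sobolevWeight α p k) * ‖B p k‖) := by
    intro p
    have := Real.sqrt_le_sqrt (sw_le hα j p k)
    rw [Real.sqrt_mul (sw_nonneg _ _ _)] at this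
    calc _ = √(sobolevWeight α j k) * (‖A j p‖ * ‖B p k‖) := by rw [norm_mul]
      _ ≤ (√(sobolevWeight α j p) * √(sobolevWeight α p k)) * (‖A j p‖ * ‖B p k‖) := by gcongr
      _ = _ := by ring
  have h1 : 1 ≤ √(sobolevWeight α j k) := Real.one_le_sqrt.2 (sw_one_le hα j k)
  have hn : Summable fun p => ‖A j p * B p k‖ :=
    Summable.of_nonneg_of_le (fun p => norm_nonneg _)
      (fun p => (le_mul_of_one_le_left (norm_nonneg _) h1).trans (hpt p)) hs
  refine ⟨hn.of_norm, le_trans ?_ hle⟩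
  have h2 : √(sobolevWeight α j k) * ‖∑' p : ℤ, A j p * B p k‖ ≤
      ∑' p, (√(sobolevWeight α j p) * ‖A j p‖) * (√(sobolevWeight α p k) * ‖B p k‖) := by
    calc _ ≤ √(sobolevWeight α j k) * ∑' p : ℤ, ‖A j p * B p k‖ := by
          gcongr; exact norm_tsum_le_tsum_norm hn
      _ = ∑' p : ℤ, √(sobolevWeight α j k) * ‖A j p * B p k‖ := tsum_mul_left.symm
      _ ≤ _ := (hn.mul_left _).tsum_le_tsum hpt hs
  have h3 := pow_le_pow_left₀ (by positivity) h2 2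
  rwa [mul_pow, Real.sq_sqrt (sw_nonneg _ _ _)] at h3

theorem sobolev_norm_submultiplicative (α : ℝ) (hα : 0 ≤ α) (A B : ℤ → ℤ → ℂ)
    (hA : Summable fun jp : ℤ × ℤ => sobolevWeight α jp.1 jp.2 * ‖A jp.1 jp.2‖ ^ 2)
    (hB : Summable fun rk : ℤ × ℤ => sobolevWeight α rk.1 rk.2 * ‖B rk.1 rk.2‖ ^ 2) :
    (∀ j k : ℤ, Summable fun p : ℤ => A j p * B p k) ∧
    Summable (fun jk : ℤ × ℤ =>
      sobolevWeight α jk.1 jk.2 * ‖∑' p : ℤ, A jk.1 p * B p jk.2‖ ^ 2) ∧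
    Real.sqrt (∑' jk : ℤ × ℤ,
        sobolevWeight α jk.1 jk.2 * ‖∑' p : ℤ, A jk.1 p * B p jk.2‖ ^ 2) ≤
      Real.sqrt (∑' jp : ℤ × ℤ, sobolevWeight α jp.1 jp.2 * ‖A jp.1 jp.2‖ ^ 2) *
      Real.sqrt (∑' rk : ℤ × ℤ, sobolevWeight α rk.1 rk.2 * ‖B rk.1 rk.2‖ ^ 2) := by
  have hBs := hB.prod_symm
  have hrow : ∀ j, Summable fun p : ℤ => sobolevWeight α j p * ‖A j p‖ ^ 2 := hA.prod_factor
  have hcol : ∀ k, Summable fun p : ℤ => sobolevWeight α p k * ‖B p k‖ ^ 2 := hBs.prod_factor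
  have hSA : Summable fun j : ℤ => ∑' p : ℤ, sobolevWeight α j p * ‖A j p‖ ^ 2 := hA.prod
  have hSB : Summable fun k : ℤ => ∑' p : ℤ, sobolevWeight α p k * ‖B p k‖ ^ 2 := hBs.prod
  have eA : ∑' jp : ℤ × ℤ, sobolevWeight α jp.1 jp.2 * ‖A jp.1 jp.2‖ ^ 2 =
      ∑' j : ℤ, ∑' p : ℤ, sobolevWeight α j p * ‖A j p‖ ^ 2 := hA.tsum_prod
  have eB : ∑' rk : ℤ × ℤ, sobolevWeight α rk.1 rk.2 * ‖B rk.1 rk.2‖ ^ 2 =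
      ∑' k : ℤ, ∑' p : ℤ, sobolevWeight α p k * ‖B p k‖ ^ 2 := by
    rw [← (Equiv.prodComm ℤ ℤ).tsum_eq]
    exact hBs.tsum_prod
  have hnn : ∀ (C : ℤ → ℤ → ℂ) (j k : ℤ), 0 ≤ sobolevWeight α j k * ‖C j k‖ ^ 2 :=
    fun C j k => mul_nonneg (sw_nonneg _ _ _) (sq_nonneg _)
  have hb := fun j k => entry_bound hα A B j k (hrow j) (hcol k)
  have hprod := hSA.mul_of_nonneg hSB (fun j => tsum_nonneg fun p => hnn A j p)
    (fun k => tsum_nonneg fun p => hnn B p k)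
  have hsum : Summable (fun jk : ℤ × ℤ =>
      sobolevWeight α jk.1 jk.2 * ‖∑' p : ℤ, A jk.1 p * B p jk.2‖ ^ 2) :=
    Summable.of_nonneg_of_le (fun jk => mul_nonneg (sw_nonneg _ _ _) (sq_nonneg _))
      (fun jk => (hb jk.1 jk.2).2) hprod
  refine ⟨fun j k => (hb j k).1, hsum, ?_⟩
  rw [eA, eB, ← Real.sqrt_mul (tsum_nonneg fun j => tsum_nonneg fun p => hnn A j p),
    hSA.tsum_mul_tsum hSB hprod]
  exact Real.sqrt_le_sqrt (hsum.tsum_le_tsum (fun jk => (hb jk.1 jk.2).2) hprod)
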